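/- Let L be the centerless twisted N=2 superconformal algebra and regard the n-fold tensor power L^{⊗n} as an L-module under the adjoint diagonal action. If r ∈ L^{⊗n} satisfies x ∗ r = 0 for all x ∈ L, then r = 0. -/

import Mathlib

namespace N2

/-- Basis indices of the centerless twisted N=2 superconformal algebra:
`L m` is the Virasoro generator `L_m` (`m ∈ ℤ`),
`T k` is the Heisenberg generator `T_{k+1/2}` (`k ∈ ℤ`, index in `1/2 + ℤ`),
`G n` is the fermionic generator `G_{n/2}` (`n ∈ ℤ`, index in `(1/2)ℤ`). -/
inductive Idx : Type
  | L : ℤ → Idx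
  | T : ℤ → Idx
  | G : ℤ → Idx
  deriving DecidableEq

noncomputable section

/-- The centerless twisted N=2 superconformal algebra `𝓛`, as the free
complex vector space on the basis `{L_m, T_r, G_p}`. -/
abbrev Lsa : Type := Idx →₀ ℂ

/-- `𝓛 ⊗ 𝓛`, realized as the free complex vector space on pairs of basis indices. -/
abbrev V : Type := (Idx × Idx) →₀ ℂ

/-- `𝓛 ⊗ 𝓛 ⊗ 𝓛`. -/
abbrev W : Type := (Idx × Idx × Idx) →₀ ℂ

/-- the basis vector indexed by `i`. -/
def e (i : Idx) : Lsa := Finsupp.single i 1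

/-- the ℤ₂-parity of the basis elements: `L_m, T_r` are even, `G_p` is odd. -/
def par : Idx → ZMod 2
  | .L _ => 0
  | .T _ => 0
  | .G _ => 1

/-- the sign `(-1)^p` for `p ∈ ℤ₂`. -/
def sgn (p : ZMod 2) : ℂ := if p = 0 then 1 else -1

/-- the `(1/2)ℤ`-degree of a basis element, as a rational number:
`L_m ↦ m`, `T_{k+1/2} ↦ k + 1/2`, `G_{n/2} ↦ n/2`. -/
def qdeg : Idx → ℚ
  | .L m => (m : ℚ)
  | .T k => (k : ℚ) + 1/2
  | .G n => (n : ℚ) / 2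

/-- The super-bracket of `𝓛` on basis elements:
`[L_m, L_n] = (m-n) L_{m+n}`, `[L_m, T_r] = -r T_{r+m}`, `[T_r, T_s] = 0`,
`[L_m, G_p] = (m/2 - p) G_{p+m}`, `[T_r, G_p] = G_{p+r}`,
`[G_p, G_q] = (-1)^{2p} 2 L_{p+q}` if `p+q ∈ ℤ` and
`[G_p, G_q] = (-1)^{2p+1} (p-q) T_{p+q}` if `p+q ∈ 1/2+ℤ`,
together with the super skew-symmetric counterparts. -/
def bk : Idx → Idx → Lsa
  | .L m, .L n => ((m : ℂ) - n) • e (.L (m + n))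
  | .L m, .T k => (-((k : ℂ) + 1/2)) • e (.T (k + m))
  | .L m, .G n => (((m : ℂ) - n) / 2) • e (.G (n + 2*m))
  | .T k, .L m => ((k : ℂ) + 1/2) • e (.T (k + m))
  | .T _, .T _ => 0
  | .T k, .G n => e (.G (n + 2*k + 1))
  | .G n, .L m => (-((m : ℂ) - n) / 2) • e (.G (n + 2*m))
  | .G n, .T k => - e (.G (n + 2*k + 1))
  | .G n, .G n' =>
      if (n + n') % 2 = 0 then
        ((-1 : ℂ) ^ n * 2) • e (.L ((n + n') / 2))
      else
        ((-1 : ℂ) ^ (n + 1) * (((n : ℂ) - n') / 2)) • e (.T ((n + n' - 1) / 2))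

/-- the bracket of `𝓛`, extended bilinearly to all of `𝓛`. -/
def br (x y : Lsa) : Lsa :=
  x.sum fun i a => y.sum fun j b => (a * b) • bk i j

/-- the adjoint diagonal action of `𝓛` on `𝓛 ⊗ 𝓛`:
`x ∗ (a ⊗ b) = [x,a] ⊗ b + (-1)^{[x][a]} a ⊗ [x,b]`. -/
def act2 (x : Lsa) (v : V) : V :=
  x.sum fun i a => v.sum fun p c =>
    (a * c) •
      (((bk i p.1).sum fun k t => Finsupp.single (k, p.2) t)
        + sgn (par i * par p.1) • ((bk i p.2).sum fun k t => Finsupp.single (p.1, k) t))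

/-- the adjoint diagonal action of `𝓛` on `𝓛 ⊗ 𝓛 ⊗ 𝓛`. -/
def act3 (x : Lsa) (w : W) : W :=
  x.sum fun i a => w.sum fun p c =>
    (a * c) •
      (((bk i p.1).sum fun k t => Finsupp.single (k, p.2.1, p.2.2) t)
        + sgn (par i * par p.1) •
            ((bk i p.2.1).sum fun k t => Finsupp.single (p.1, k, p.2.2) t)
        + sgn (par i * (par p.1 + par p.2.1)) •
            ((bk i p.2.2).sum fun k t => Finsupp.single (p.1, p.2.1, k) t))

/-- the adjoint diagonal action of `𝓛` on the `n`-fold tensor power `𝓛^{⊗n}`,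
realized as the free complex vector space on `n`-tuples of basis indices:
`x ∗ (a₁ ⊗ ⋯ ⊗ aₙ) = Σ_k (-1)^{[x]([a₁]+⋯+[a_{k-1}])} a₁ ⊗ ⋯ ⊗ [x,a_k] ⊗ ⋯ ⊗ aₙ`. -/
def actN (n : ℕ) (x : Lsa) (v : (Fin n → Idx) →₀ ℂ) : (Fin n → Idx) →₀ ℂ :=
  x.sum fun i a => v.sum fun f c =>
    (a * c) •
      (Finset.univ.sum fun k : Fin n =>
        sgn (par i * ((Finset.univ.filter fun l => l < k).sum fun l => par (f l))) •
          ((bk i (f k)).sum fun j t => Finsupp.single (Function.update f k j) t))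

/-- the super-twist map `τ : 𝓛 ⊗ 𝓛 → 𝓛 ⊗ 𝓛`, `τ(x ⊗ y) = (-1)^{[x][y]} y ⊗ x`. -/
def tau (v : V) : V :=
  v.sum fun p c => (sgn (par p.1 * par p.2) * c) • Finsupp.single (p.2, p.1) 1

/-- the image `Im(1⊗1 - τ) ⊂ 𝓛 ⊗ 𝓛`. -/
def ImOneSubTau : Set V := Set.range fun v : V => v - tau v

/-- the super-cyclic map `ξ` on `𝓛 ⊗ 𝓛 ⊗ 𝓛`:
`ξ(x₁ ⊗ x₂ ⊗ x₃) = (-1)^{[x₁]([x₂]+[x₃])} x₂ ⊗ x₃ ⊗ x₁`. -/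
def xi (w : W) : W :=
  w.sum fun p c =>
    (sgn (par p.1 * (par p.2.1 + par p.2.2)) * c) • Finsupp.single (p.2.1, p.2.2, p.1) 1

/-- `c(r) = [r¹², r¹³] + [r¹², r²³] + [r¹³, r²³] ∈ 𝓛 ⊗ 𝓛 ⊗ 𝓛` for `r ∈ 𝓛 ⊗ 𝓛`. -/
def cYB (r : V) : W :=
  r.sum fun p a => r.sum fun q b =>
    (a * b) •
      (sgn (par q.1 * par p.2) •
          ((bk p.1 q.1).sum fun k t => Finsupp.single (k, p.2, q.2) t)
        + ((bk p.2 q.1).sum fun k t => Finsupp.single (p.1, k, q.2) t)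
        + sgn (par q.1 * par p.2) •
            ((bk p.2 q.2).sum fun k t => Finsupp.single (p.1, q.1, k) t))

/-- `1 ⊗ D : 𝓛 ⊗ 𝓛 → 𝓛 ⊗ 𝓛 ⊗ 𝓛` for an even map `D : 𝓛 → 𝓛 ⊗ 𝓛`. -/
def oneTensorMap (D : Lsa → V) (v : V) : W :=
  v.sum fun p c => c • ((D (e p.2)).sum fun q t => Finsupp.single (p.1, q.1, q.2) t)

/-- `r ∈ 𝓛 ⊗ 𝓛` is homogeneous of parity `ε ∈ ℤ₂`. -/
def IsParityV (ε : ZMod 2) (r : V) : Prop := ∀ p ∈ r.support, par p.1 + par p.2 = ε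

/-- `r ∈ 𝓛 ⊗ 𝓛` is even (degree `0̄`). -/
def IsEvenV (r : V) : Prop := IsParityV 0 r

/-- `r` lies in the graded component `V_ι = Σ_{j+k=ι} 𝓛_j ⊗ 𝓛_k` of `V = 𝓛 ⊗ 𝓛`. -/
def IsDegV (ι : ℚ) (r : V) : Prop := ∀ p ∈ r.support, qdeg p.1 + qdeg p.2 = ι

/-- the linear map `𝓛 → M` with the prescribed values on the basis. -/
def ofBasis {M : Type*} [AddCommMonoid M] [Module ℂ M] (g : Idx → M) : Lsa →ₗ[ℂ] M :=
  Finsupp.lsum ℂ fun i => LinearMap.toSpanSingleton ℂ M (g i)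

/-- the inner super-derivation `a_inn` attached to `a ∈ 𝓛 ⊗ 𝓛` of parity `ε`:
`a_inn(x) = (-1)^{[a][x]} x ∗ a` for homogeneous `x`, extended linearly. -/
def innMap (ε : ZMod 2) (a : V) : Lsa →ₗ[ℂ] V :=
  ofBasis fun i => sgn (ε * par i) • act2 (e i) a

/-- `d : 𝓛 → 𝓛 ⊗ 𝓛` is a super-derivation of parity `ε`:
`d(𝓛_ī) ⊆ V_{ī+ε}` and
`d([x,y]) = (-1)^{[d][x]} x ∗ d(y) - (-1)^{[y]([d]+[x])} y ∗ d(x)`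
for homogeneous `x, y` (stated on basis elements and extended bilinearly). -/
def IsDerOfParity (ε : ZMod 2) (d : Lsa →ₗ[ℂ] V) : Prop :=
  (∀ i : Idx, IsParityV (par i + ε) (d (e i))) ∧
  (∀ i j : Idx,
    d (bk i j)
      = sgn (ε * par i) • act2 (e i) (d (e j))
        - sgn (par j * (ε + par i)) • act2 (e j) (d (e i)))

/-- `d` is homogeneous of degree `ι ∈ (1/2)ℤ` with respect to the `(1/2)ℤ`-grading:
`d(𝓛_j) ⊆ V_{ι+j}`. -/
def IsDegHomogDer (ι : ℚ) (d : Lsa →ₗ[ℂ] V) : Prop :=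
  ∀ i : Idx, IsDegV (ι + qdeg i) (d (e i))

/-- `D : 𝓛 → 𝓛 ⊗ 𝓛` defines a Lie super-bialgebra structure on `𝓛`: it is linear,
`D(𝓛_ī) ⊆ Σ_j 𝓛_j̄ ⊗ 𝓛_{ī-j̄}`, `Im D ⊆ Im(1⊗1-τ)`,
`(1⊗1⊗1 + ξ + ξ²)(1 ⊗ D)D = 0`, and
`D([x,y]) = x ∗ D(y) - (-1)^{[x][y]} y ∗ D(x)`. -/
structure IsLieSuperBialgebraDelta (D : Lsa → V) : Prop where
  linear : IsLinearMap ℂ D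
  parity : ∀ i : Idx, IsParityV (par i) (D (e i))
  skewIm : ∀ x : Lsa, D x ∈ ImOneSubTau
  coJacobi : ∀ x : Lsa,
    oneTensorMap D (D x) + xi (oneTensorMap D (D x)) + xi (xi (oneTensorMap D (D x))) = 0
  cocycle : ∀ i j : Idx,
    D (bk i j) = act2 (e i) (D (e j)) - sgn (par i * par j) • act2 (e j) (D (e i))

/-- the integer labelling a basis element. -/
def ix : Idx → ℤ
  | .L m => m
  | .T k => k
  | .G n => n

/-- the basis element hit by `ad L_m`. -/
def sh (m : ℤ) : Idx → Idx
  | .L n => .L (m + n)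
  | .T k => .T (k + m)
  | .G n => .G (n + 2*m)

/-- the coefficient of `ad L_m`. -/
def cf (m : ℤ) : Idx → ℂ
  | .L n => (m : ℂ) - n
  | .T k => -((k : ℂ) + 1/2)
  | .G n => ((m : ℂ) - n) / 2

lemma bk_L (m : ℤ) (i : Idx) : bk (.L m) i = Finsupp.single (sh m i) (cf m i) := by
  cases i <;> simp [bk, sh, cf, e]

lemma sh_inj (m : ℤ) {i j : Idx} (h : sh m i = sh m j) : i = j := by
  cases i <;> cases j <;> simp_all [sh]

lemma ix_sh (m B : ℤ) (i : Idx) (hi : |ix i| ≤ B) (hm : 2 * B < m) : B < ix (sh m i) := by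
  have := abs_le.mp hi
  cases i <;> simp only [ix, sh] at * <;> omega

lemma cf_ne (m B : ℤ) (i : Idx) (hi : |ix i| ≤ B) (hm : 2 * B < m) : cf m i ≠ 0 := by
  have := abs_le.mp hi
  cases i with
  | L n =>
    simp only [ix, cf] at *
    have : m - n ≠ 0 := by omega
    exact_mod_cast this
  | T k =>
    simp only [cf]
    intro h
    have h2 : ((2 * k + 1 : ℤ) : ℂ) = 0 := by push_cast; linear_combination -2 * h
    have h3 : 2 * k + 1 = 0 := by exact_mod_cast h2
    omega
  | G n =>
    simp only [ix, cf] at *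
    have : m - n ≠ 0 := by omega
    exact div_ne_zero (by exact_mod_cast this) two_ne_zero

lemma actN_L (n : ℕ) (m : ℤ) (r : (Fin n → Idx) →₀ ℂ) :
    actN n (e (.L m)) r = ∑ f ∈ r.support, ∑ k : Fin n,
      Finsupp.single (Function.update f k (sh m (f k))) (r f * cf m (f k)) := by
  unfold actN e
  rw [Finsupp.sum_single_index (by simp [Finsupp.sum])]
  simp only [Finsupp.sum]
  refine Finset.sum_congr rfl fun f _ => ?_
  rw [Finset.smul_sum]
  refine Finset.sum_congr rfl fun k _ => ?_
  have h1 := Finsupp.sum_single_index (a := sh m (f k)) (b := cf m (f k))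
    (h := fun j t => Finsupp.single (Function.update f k j) t) (by simp)
  rw [bk_L]
  simp only [Finsupp.sum] at h1
  rw [h1]
  simp [par, sgn]

/-- If `r ∈ 𝓛^{⊗n}` satisfies `x ∗ r = 0` for all `x ∈ 𝓛` (adjoint diagonal
action on the `n`-fold tensor power), then `r = 0`. -/
theorem tensor_power_no_invariants (n : ℕ) (hn : 0 < n) (r : (Fin n → Idx) →₀ ℂ)
    (h : ∀ x : Lsa, actN n x r = 0) : r = 0 := by
  by_contra hr
  obtain ⟨f0, hf0⟩ := Finsupp.support_nonempty_iff.mpr hr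
  let k0 : Fin n := ⟨0, hn⟩
  obtain ⟨B, hB⟩ : ∃ B : ℤ, ∀ f ∈ r.support, ∀ k, |ix (f k)| ≤ B := by
    refine ⟨∑ f ∈ r.support, ∑ k, |ix (f k)|, fun f hf k => ?_⟩
    refine le_trans (Finset.single_le_sum (f := fun k => |ix (f k)|)
      (fun _ _ => abs_nonneg _) (Finset.mem_univ k)) ?_
    exact Finset.single_le_sum (f := fun f : Fin n → Idx => ∑ k, |ix (f k)|)
      (fun _ _ => Finset.sum_nonneg fun _ _ => abs_nonneg _) hf
  obtain ⟨m, hm⟩ : ∃ m : ℤ, 2 * B < m := ⟨2 * B + 1, by omega⟩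
  have key := DFunLike.congr_fun (h (e (.L m))) (Function.update f0 k0 (sh m (f0 k0)))
  rw [actN_L, Finsupp.finset_sum_apply] at key
  simp only [Finsupp.finset_sum_apply] at key
  have main : ∀ f ∈ r.support, ∀ k : Fin n,
      Function.update f k (sh m (f k)) = Function.update f0 k0 (sh m (f0 k0)) →
      f = f0 ∧ k = k0 := by
    intro f hf k he
    have hk : k = k0 := by
      by_contra hk
      have h1 := congrFun he k
      rw [Function.update_self, Function.update_of_ne hk] at h1
      have h2 := ix_sh m B (f k) (hB f hf k) hm
      rw [h1] at h2
      have h3 := abs_le.mp (hB f0 hf0 k)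
      omega
    subst hk
    refine ⟨funext fun l => ?_, rfl⟩
    have h1 := congrFun he l
    by_cases hl : l = k0
    · subst hl
      rw [Function.update_self, Function.update_self] at h1
      exact sh_inj m h1
    · rwa [Function.update_of_ne hl, Function.update_of_ne hl] at h1
  rw [Finset.sum_eq_single_of_mem f0 hf0, Finset.sum_eq_single_of_mem k0 (Finset.mem_univ _),
    Finsupp.single_eq_same] at key
  · exact mul_ne_zero (Finsupp.mem_support_iff.mp hf0) (cf_ne m B _ (hB f0 hf0 k0) hm) key
  · intro k _ hk
    exact Finsupp.single_eq_of_ne' fun he => hk (main f0 hf0 k he).2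
  · intro f hf hne
    refine Finset.sum_eq_zero fun k _ => ?_
    exact Finsupp.single_eq_of_ne' fun he => hne (main f hf k he).1

end
end N2
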